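/- Let ω : (0,π] → (0,∞) be continuous and increasing, with t ↦ ω(t^γ) concave for some γ > 2 and t ↦ tω'(t)/ω(t) increasing, let E ⊆ 𝕋 be a Carleson set of Lebesgue measure zero with log ω(dist(·,E)) ∈ L¹(𝕋), and let ζ ∈ 𝕋∖E. Then: (i) D_{ζ, I(ζ,E)}(f_{ω,E}) ≲ dist(ζ,E) ω'(dist(ζ,E))²; (ii) D_{ζ, Σ(ζ,E)}(f_{ω,E}) ≲ dist(ζ,E) ω'(dist(ζ,E))²; (iii) D_ζ(f_{ω,E}) ≳ dist(ζ,E) ω'(dist(ζ,E))², where all implied constants depend only on γ. -/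

import Mathlib

open MeasureTheory Real Set

noncomputable section

/-- The unit circle in `ℂ`. -/
def circleT : Set ℂ := Metric.sphere (0 : ℂ) 1

/-- Arc-length parametrization of the unit circle. -/
def cpt (θ : ℝ) : ℂ := Complex.exp (θ * Complex.I)

/-- Distance from a point to a set. -/
def dE (E : Set ℂ) (ζ : ℂ) : ℝ := Metric.infDist ζ E

/-- Arc-length integral over the whole circle. -/
def circInt (f : ℂ → ℝ) : ℝ := ∫ θ in Set.Ioc 0 (2 * π), f (cpt θ)

/-- Arc-length integral over a subset `Λ` of the circle. -/
def circIntOn (Λ : Set ℂ) (f : ℂ → ℝ) : ℝ :=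
  ∫ θ in {θ ∈ Set.Ioc 0 (2 * π) | cpt θ ∈ Λ}, f (cpt θ)

/-- `E` has arc-length (Lebesgue) measure zero. -/
def MeasureZeroOnCircle (E : Set ℂ) : Prop :=
  volume {θ ∈ Set.Ioc 0 (2 * π) | cpt θ ∈ E} = 0

/-- `E` is a Carleson set: `∫_𝕋 log dist(ζ,E) |dζ| > -∞`. -/
def CarlesonSet (E : Set ℂ) : Prop :=
  IntegrableOn (fun θ => Real.log (dE E (cpt θ))) (Set.Ioc 0 (2 * π)) volume

/-- `I(ζ,E)`: the connected component of `𝕋 \ E` containing `ζ`. -/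
def compArc (E : Set ℂ) (ζ : ℂ) : Set ℂ := connectedComponentIn (circleT \ E) ζ

/-- `Γ(ζ,E)`. -/
def GammaSet (E : Set ℂ) (ζ : ℂ) : Set ℂ :=
  {ζ' ∈ circleT \ compArc E ζ | dE E ζ' ≤ dE E ζ}

/-- `Σ(ζ,E)`. -/
def SigmaSet (E : Set ℂ) (ζ : ℂ) : Set ℂ :=
  {ζ' ∈ circleT \ compArc E ζ | dE E ζ ≤ dE E ζ'}

/-- The Richter–Sundberg integrand for the outer function with boundary modulus
`ω(dist(·,E))`. -/
def RSker (ω : ℝ → ℝ) (E : Set ℂ) (ζ ζ' : ℂ) : ℝ :=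
  ((ω (dE E ζ')) ^ 2 - (ω (dE E ζ)) ^ 2
    - 2 * (ω (dE E ζ)) ^ 2 * Real.log (ω (dE E ζ') / ω (dE E ζ))) / ‖ζ - ζ'‖ ^ 2

/-- Local Dirichlet integral `D_ζ(f_{ω,E})` (Richter–Sundberg formula). -/
def locDir (ω : ℝ → ℝ) (E : Set ℂ) (ζ : ℂ) : ℝ :=
  (1 / (2 * π)) * circInt (fun ζ' => RSker ω E ζ ζ')

/-- Local Dirichlet integral restricted to `Λ`. -/
def locDirOn (ω : ℝ → ℝ) (E : Set ℂ) (Λ : Set ℂ) (ζ : ℂ) : ℝ :=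
  (1 / (2 * π)) * circIntOn Λ (fun ζ' => RSker ω E ζ ζ')

/-- `E` is an `𝓛₁`-set. -/
def L1Set (E : Set ℂ) : Prop :=
  ∃ C > 0, ∀ ζ ∈ circleT \ E,
    circIntOn (GammaSet E ζ)
      (fun ζ' => Real.log (dE E ζ / dE E ζ') / ‖ζ - ζ'‖ ^ 2) ≤ C / dE E ζ

/-- The `𝓛₂` inequality with constant `C`. -/
def L2With (E : Set ℂ) (C : ℝ) : Prop :=
  ∀ ζ ∈ circleT \ E,
    circIntOn (GammaSet E ζ)
      (fun ζ' => (Real.log (dE E ζ / dE E ζ')) ^ 2 / ‖ζ - ζ'‖ ^ 2) ≤ C / dE E ζ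

/-- `E` is an `𝓛₂`-set. -/
def L2Set (E : Set ℂ) : Prop := ∃ C > 0, L2With E C

/-- Supremum of `dist(·,E)` over the arc `cpt '' (a,b]`. -/
def arcSup (E : Set ℂ) (a b : ℝ) : ℝ := sSup ((fun θ => dE E (cpt θ)) '' Set.Ioc a b)

/-- `E` is a `𝒦`-set (Kotochigov). -/
def KSet (E : Set ℂ) : Prop :=
  ∃ c > 0, ∀ a b : ℝ, a < b → b ≤ a + 2 * π → c * (b - a) ≤ arcSup E a b

/-- Integral of a weight over the arc `cpt '' (a,b]` (with respect to arc length). -/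
def arcInt (w : ℂ → ℝ) (a b : ℝ) : ℝ := ∫ θ in Set.Ioc a b, w (cpt θ)

/-- Double logarithmic integral of a weight over an arc. -/
def arcDouble (w : ℂ → ℝ) (a b : ℝ) : ℝ :=
  ∫ θ in Set.Ioc a b, (∫ θ' in Set.Ioc a b,
    Real.log (1 / ‖cpt θ - cpt θ'‖) * w (cpt θ) * w (cpt θ'))

/-- Arc-length measure of `{ζ ∈ I : dist(ζ,E) ≤ t}` for the arc `cpt '' (a,b]`. -/
def sublevelMeas (E : Set ℂ) (a b t : ℝ) : ℝ :=
  (volume {θ ∈ Set.Ioc a b | dE E (cpt θ) ≤ t}).toReal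

/-- Arc-length measure of `E_t = {ζ ∈ 𝕋 : dist(ζ,E) ≤ t}`. -/
def EtMeas (E : Set ℂ) (t : ℝ) : ℝ := sublevelMeas E 0 (2 * π) t

/-- The open unit disc. -/
def unitDisc : Set ℂ := Metric.ball (0 : ℂ) 1

/-- Membership in the (holomorphic) Dirichlet space `𝒟`. -/
def MemDirichlet (f : ℂ → ℂ) : Prop :=
  DifferentiableOn ℂ f unitDisc ∧
  (∃ M : ℝ, ∀ r ∈ Set.Ioo (0 : ℝ) 1,
    (∫ θ in Set.Ioc 0 (2 * π), ‖f ((r : ℂ) * cpt θ)‖ ^ 2) ≤ M) ∧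
  IntegrableOn (fun z => ‖deriv f z‖ ^ 2) unitDisc volume

/-- `f` is a multiplier of the Dirichlet space `𝒟`. -/
def IsMultiplierD (f : ℂ → ℂ) : Prop :=
  ∀ g : ℂ → ℂ, MemDirichlet g → MemDirichlet (fun z => f z * g z)

/-- The outer function `f_{ω,E}` with boundary modulus `ω(dist(·,E))`. -/
def outerFun (ω : ℝ → ℝ) (E : Set ℂ) (z : ℂ) : ℂ :=
  Complex.exp ((((2 * π)⁻¹ : ℝ) : ℂ) * ∫ θ in Set.Ioc 0 (2 * π),
    ((cpt θ + z) / (cpt θ - z)) * ((Real.log (ω (dE E (cpt θ))) : ℝ) : ℂ))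

/-- `log ω(dist(·,E)) ∈ L¹(𝕋)`. -/
def LogOmegaInt (ω : ℝ → ℝ) (E : Set ℂ) : Prop :=
  IntegrableOn (fun θ => Real.log (ω (dE E (cpt θ)))) (Set.Ioc 0 (2 * π)) volume

/-- Standing hypotheses on `ω` (with derivative `ω'`): continuous, positive, increasing on
`(0,π]`, differentiable with derivative `ω'`, `t ↦ ω(t^γ)` concave, and `t ↦ tω'(t)/ω(t)`
increasing. -/
def OmegaHyp (ω ω' : ℝ → ℝ) (γ : ℝ) : Prop :=
  ContinuousOn ω (Set.Ioc 0 π) ∧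
  (∀ t ∈ Set.Ioc (0 : ℝ) π, 0 < ω t) ∧
  MonotoneOn ω (Set.Ioc 0 π) ∧
  (∀ t ∈ Set.Ioo (0 : ℝ) π, HasDerivAt ω (ω' t) t) ∧
  ConcaveOn ℝ (Set.Ioc 0 (π ^ γ⁻¹)) (fun t => ω (t ^ γ)) ∧
  MonotoneOn (fun t => t * ω' t / ω t) (Set.Ioo 0 π)

/-- The generalized Cantor set `E_{(ζ_n)}` (with `ξ k` playing the role of `ζ_{k+1}`). -/
def gCantorSet (ξ : ℕ → ℝ) : Set ℂ :=
  {z | ∃ ε : ℕ → Bool, z = Complex.exp (((2 * π : ℝ) : ℂ) * Complex.I *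
    ((∑' n : ℕ, (if ε n then (1 : ℝ) else 0) * (∏ k ∈ Finset.range n, ξ k) * (1 - ξ n) : ℝ) : ℂ))}

end

/-!
Put `u = dist(ζ, E)` and measure lengths in units of `u` and the Richter–Sundberg kernel in units
of `ω'(u)²`. Its numerator is comparable to `(ω(v) - ω(u))²` for `v = dist(ζ', E) ≥ u`, where
concavity of `t ↦ ω(t^γ)` bounds the increment by a linear and by a `1/γ`-Hölder function of
`v - u ≤ |ζ - ζ'|`. For `v < u` the numerator is at most `2ω(u)² log²(ω(u)/ω(v))`, and
monotonicity of `tω'/ω` bounds this logarithm by `(uω'(u)/ω(u)) log(u/v)`. Either way the kernel is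
dominated by the radial profile `min(s^(-1/2), s^(2/γ-2))`, integrable because `γ > 2`, with `s`
measured from `ζ` when `v ≥ u` and from an endpoint of the arc `I(ζ, E)` when `v < u`; this gives
the upper bounds. For the lower bound, on the arc of length `u` around the point of `E` nearest to
`ζ` one has `v ≤ u/2`, so `ω(u) - ω(v) ≥ uω'(u)/2` by concavity, while `|ζ - ζ'| ≤ 3u/2`.
-/

section RichterSundbergNumerator

/-- The numerator of the Richter–Sundberg kernel `RSker`, as a function of the boundary moduli
`p = |f(ζ')|` and `q = |f(ζ)|`. -/
noncomputable def rsNumerator (p q : ℝ) : ℝ := p ^ 2 - q ^ 2 - 2 * q ^ 2 * Real.log (p / q)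

lemma RSker_eq_rsNumerator_div (ω : ℝ → ℝ) (E : Set ℂ) (ζ z : ℂ) :
    RSker ω E ζ z = rsNumerator (ω (dE E z)) (ω (dE E ζ)) / ‖ζ - z‖ ^ 2 :=
  rfl

variable {p q : ℝ}

lemma sq_sub_le_rsNumerator (hp : 0 < p) (hq : 0 < q) : (p - q) ^ 2 ≤ rsNumerator p q := by
  have hlog := mul_le_mul_of_nonneg_left (Real.log_le_sub_one_of_pos (div_pos hp hq)) (sq_nonneg q)
  have hexpand : q ^ 2 * (p / q - 1) = q * p - q ^ 2 := by field_simp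
  unfold rsNumerator
  linarith

lemma rsNumerator_nonneg (hp : 0 < p) (hq : 0 < q) : 0 ≤ rsNumerator p q :=
  (sq_nonneg _).trans (sq_sub_le_rsNumerator hp hq)

lemma rsNumerator_le_three_mul_sq_sub (hq : 0 < q) (hqp : q ≤ p) :
    rsNumerator p q ≤ 3 * (p - q) ^ 2 := by
  have hp : 0 < p := hq.trans_le hqp
  have hlog := mul_le_mul_of_nonneg_left
    (Real.one_sub_inv_le_log_of_pos (div_pos hp hq)) (sq_nonneg q)
  have hdefect : 3 * (p - q) ^ 2 - (p ^ 2 - q ^ 2 - 2 * (q ^ 2 * (1 - (p / q)⁻¹)))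
      = 2 * (p - q) ^ 3 / p := by
    field_simp
    ring
  have hdefect_nonneg : 0 ≤ 2 * (p - q) ^ 3 / p := by
    have := sub_nonneg.2 hqp
    positivity
  unfold rsNumerator
  linarith

lemma rsNumerator_div_sq_le_of_sub_le (hq : 0 < q) (hqp : q ≤ p) {r B : ℝ} (hr : 0 < r)
    (hgap : p - q ≤ r * B) : rsNumerator p q / r ^ 2 ≤ 3 * B ^ 2 := by
  have := sub_nonneg.2 hqp
  rw [div_le_iff₀ (by positivity)]
  calc rsNumerator p q ≤ 3 * (p - q) ^ 2 := rsNumerator_le_three_mul_sq_sub hq hqp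
    _ ≤ 3 * (r * B) ^ 2 := by gcongr
    _ = _ := by ring

lemma exp_neg_le_one_sub_add_sq_half {x : ℝ} (hx : 0 ≤ x) :
    Real.exp (-x) ≤ 1 - x + x ^ 2 / 2 := by
  have hexp := Real.quadratic_le_exp_of_nonneg hx
  rw [Real.exp_neg, inv_le_iff_one_le_mul₀ (Real.exp_pos x)]
  nlinarith [sq_nonneg (x ^ 2), sq_nonneg (x - 1)]

lemma rsNumerator_le_two_mul_sq_log (hp : 0 < p) (hpq : p ≤ q) :
    rsNumerator p q ≤ 2 * q ^ 2 * Real.log (q / p) ^ 2 := by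
  have hq : 0 < q := hp.trans_le hpq
  set L := Real.log (q / p)
  have hL : 0 ≤ L := Real.log_nonneg ((one_le_div hp).2 hpq)
  have hlog : Real.log (p / q) = -L := by rw [← Real.log_inv, inv_div]
  have hp_eq : p = q * Real.exp (-L) := by
    rw [← hlog, Real.exp_log (div_pos hp hq)]
    field_simp
  have hp_sq : p ^ 2 = q ^ 2 * Real.exp (-(2 * L)) := by
    rw [hp_eq, mul_pow, ← Real.exp_nat_mul, Nat.cast_two, mul_neg]
  calc rsNumerator p q = q ^ 2 * (Real.exp (-(2 * L)) - 1 + 2 * L) := by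
        rw [rsNumerator, hlog, hp_sq]
        ring
    _ ≤ q ^ 2 * (2 * L ^ 2) := by
        gcongr
        linarith [exp_neg_le_one_sub_add_sq_half (x := 2 * L) (by positivity)]
    _ = 2 * q ^ 2 * L ^ 2 := by ring

end RichterSundbergNumerator

lemma sub_le_mul_sub_of_concaveOn {f : ℝ → ℝ} {f' x y : ℝ} {S : Set ℝ} (hf : ConcaveOn ℝ S f)
    (hx : x ∈ S) (hy : y ∈ S) (hf' : HasDerivAt f f' x) : f y - f x ≤ f' * (y - x) := by
  rcases lt_trichotomy x y with hxy | rfl | hxy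
  · have hslope := hf.slope_le_of_hasDerivAt hx hy hxy hf'
    rwa [slope_def_field, div_le_iff₀ (sub_pos.2 hxy)] at hslope
  · simp
  · have hslope := hf.le_slope_of_hasDerivAt hy hx hxy hf'
    rw [slope_def_field, le_div_iff₀ (sub_pos.2 hxy)] at hslope
    linarith

namespace OmegaHyp

variable {ω ω' : ℝ → ℝ} {γ u v : ℝ}

lemma pos (h : OmegaHyp ω ω' γ) (hu : u ∈ Ioc 0 π) : 0 < ω u := h.2.1 u hu

lemma monotoneOn (h : OmegaHyp ω ω' γ) : MonotoneOn ω (Ioc 0 π) := h.2.2.1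

lemma hasDerivAt (h : OmegaHyp ω ω' γ) (hu : u ∈ Ioo 0 π) : HasDerivAt ω (ω' u) u :=
  h.2.2.2.1 u hu

lemma concaveOn_comp_rpow (h : OmegaHyp ω ω' γ) :
    ConcaveOn ℝ (Ioc 0 (π ^ γ⁻¹)) (fun t => ω (t ^ γ)) := h.2.2.2.2.1

lemma monotoneOn_mul_deriv_div (h : OmegaHyp ω ω' γ) :
    MonotoneOn (fun t => t * ω' t / ω t) (Ioo 0 π) := h.2.2.2.2.2

lemma deriv_nonneg (h : OmegaHyp ω ω' γ) (hu : u ∈ Ioo 0 π) : 0 ≤ ω' u := by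
  rw [← (h.hasDerivAt hu).hasDerivWithinAt.derivWithin (isOpen_Ioo.uniqueDiffWithinAt hu)]
  exact (h.monotoneOn.mono Ioo_subset_Ioc_self).derivWithin_nonneg

lemma sub_le_mul_rpow_sub_one (h : OmegaHyp ω ω' γ) (hγ : 0 < γ) (hu : u ∈ Ioo 0 π)
    (hv : v ∈ Ioc 0 π) : ω v - ω u ≤ γ * u * ω' u * ((v / u) ^ γ⁻¹ - 1) := by
  have hpow : ∀ t ∈ Ioc 0 π, (t ^ γ⁻¹) ^ γ = t := fun t ht =>
    Real.rpow_inv_rpow ht.1.le hγ.ne'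
  have hmem : ∀ t ∈ Ioc 0 π, t ^ γ⁻¹ ∈ Ioc 0 (π ^ γ⁻¹) := fun t ht =>
    ⟨Real.rpow_pos_of_pos ht.1 _, Real.rpow_le_rpow ht.1.le ht.2 (inv_nonneg.2 hγ.le)⟩
  have hu' : u ∈ Ioc 0 π := Ioo_subset_Ioc_self hu
  set x := u ^ γ⁻¹
  have hx_mem : x ∈ Ioc 0 (π ^ γ⁻¹) := hmem u hu'
  have hx : 0 < x := hx_mem.1
  have hxu : x ^ γ = u := hpow u hu'
  have hderiv : HasDerivAt (fun t => ω (t ^ γ)) (ω' u * (γ * x ^ (γ - 1))) x := by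
    have hω : HasDerivAt ω (ω' u) (x ^ γ) := hxu.symm ▸ h.hasDerivAt hu
    exact hω.comp x (Real.hasDerivAt_rpow_const (Or.inl hx.ne'))
  have htangent :=
    sub_le_mul_sub_of_concaveOn h.concaveOn_comp_rpow hx_mem (hmem v hv) hderiv
  simp only [hpow v hv, hxu] at htangent
  have hxγ : x ^ (γ - 1) * x = u := by
    rw [← Real.rpow_add_one hx.ne', sub_add_cancel, hxu]
  calc ω v - ω u ≤ ω' u * (γ * x ^ (γ - 1)) * (v ^ γ⁻¹ - x) := htangent
    _ = γ * (x ^ (γ - 1) * x) * ω' u * (v ^ γ⁻¹ / x - 1) := by field_simp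
    _ = _ := by rw [hxγ, Real.div_rpow hv.1.le hu.1.le]

lemma sub_le_deriv_mul_sub (h : OmegaHyp ω ω' γ) (hγ : 1 ≤ γ) (hu : u ∈ Ioo 0 π)
    (hv : v ∈ Ioc 0 π) : ω v - ω u ≤ ω' u * (v - u) := by
  have hu0 : 0 < u := hu.1
  have hω' := h.deriv_nonneg hu
  have hdiv : 1 + (v / u - 1) = v / u := by ring
  have hbernoulli := rpow_one_add_le_one_add_mul_self (s := v / u - 1) (p := γ⁻¹)
    (by linarith [div_pos hv.1 hu0]) (by positivity) (inv_le_one_of_one_le₀ hγ)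
  rw [hdiv] at hbernoulli
  calc ω v - ω u ≤ γ * u * ω' u * ((v / u) ^ γ⁻¹ - 1) :=
        h.sub_le_mul_rpow_sub_one (by linarith) hu hv
    _ ≤ γ * u * ω' u * (γ⁻¹ * (v / u - 1)) := by
        gcongr
        linarith
    _ = ω' u * (v - u) := by field_simp

lemma sub_le_mul_rpow_sub_div (h : OmegaHyp ω ω' γ) (hγ : 1 ≤ γ) (hu : u ∈ Ioo 0 π)
    (hv : v ∈ Ioc 0 π) (huv : u ≤ v) :
    ω v - ω u ≤ γ * u * ω' u * ((v - u) / u) ^ γ⁻¹ := by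
  have hu0 : 0 < u := hu.1
  have hω' := h.deriv_nonneg hu
  have hdiv : 1 + (v - u) / u = v / u := by
    field_simp
    ring
  have hsubadd := Real.rpow_add_le_add_rpow (zero_le_one' ℝ)
    (div_nonneg (sub_nonneg.2 huv) hu0.le) (p := γ⁻¹) (by positivity) (inv_le_one_of_one_le₀ hγ)
  rw [Real.one_rpow, hdiv] at hsubadd
  refine (h.sub_le_mul_rpow_sub_one (by linarith) hu hv).trans ?_
  gcongr
  linarith

lemma log_div_le (h : OmegaHyp ω ω' γ) (hu : u ∈ Ioo 0 π) (hv : 0 < v) (hvu : v ≤ u) :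
    Real.log (ω u / ω v) ≤ u * ω' u / ω u * Real.log (u / v) := by
  set A := u * ω' u / ω u
  have hmem : ∀ s ∈ Icc v u, s ∈ Ioo 0 π := fun s hs => ⟨hv.trans_le hs.1, hs.2.trans_lt hu.2⟩
  have hpos : ∀ s ∈ Icc v u, 0 < ω s := fun s hs => h.pos (Ioo_subset_Ioc_self (hmem s hs))
  have hderiv : ∀ s ∈ Icc v u,
      HasDerivAt (fun t => A * Real.log t - Real.log (ω t)) (A * s⁻¹ - ω' s / ω s) s := fun s hs =>
    ((Real.hasDerivAt_log (hmem s hs).1.ne').const_mul A).sub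
      ((h.hasDerivAt (hmem s hs)).log (hpos s hs).ne')
  have hderiv_nonneg : ∀ s ∈ Icc v u, 0 ≤ A * s⁻¹ - ω' s / ω s := fun s hs => by
    have hs0 := (hmem s hs).1
    have hA : s * ω' s / ω s ≤ A := h.monotoneOn_mul_deriv_div (hmem s hs) hu hs.2
    have hfactor : A * s⁻¹ - ω' s / ω s = (A - s * ω' s / ω s) / s := by field_simp
    exact hfactor ▸ div_nonneg (sub_nonneg.2 hA) hs0.le
  have hmono : MonotoneOn (fun t => A * Real.log t - Real.log (ω t)) (Icc v u) :=
    monotoneOn_of_hasDerivWithinAt_nonneg (convex_Icc v u)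
      (fun s hs => (hderiv s hs).continuousAt.continuousWithinAt)
      (fun s hs => (hderiv s (interior_subset hs)).hasDerivWithinAt)
      (fun s hs => hderiv_nonneg s (interior_subset hs))
  have hv_mem : v ∈ Icc v u := left_mem_Icc.2 hvu
  have hu_mem : u ∈ Icc v u := right_mem_Icc.2 hvu
  have hcompare := hmono hv_mem hu_mem hvu
  rw [Real.log_div (hpos u hu_mem).ne' (hpos v hv_mem).ne', Real.log_div hu.1.ne' hv.ne']
  simp only at hcompare
  linarith

end OmegaHyp

section RadialMajorant

/-- A nonnegative function on `(0, ∞)`, decreasing and with `x ↦ ψ |x|` integrable on the line.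
After rescaling and centring at a point of the circle such functions dominate the
Richter–Sundberg kernel. -/
structure IsRadialMajorant (ψ : ℝ → ℝ) : Prop where
  measurable : Measurable ψ
  antitoneOn : AntitoneOn ψ (Ioi 0)
  nonneg : ∀ s, 0 ≤ s → 0 ≤ ψ s
  integrable_abs : Integrable fun x : ℝ => ψ |x|

/-- The radial profile `s ^ (-1/2)` near `0` and `s ^ (2a - 2)` near `∞`, which bounds the
Richter–Sundberg kernel in units of `ω'(dist(ζ, E))²` and `dist(ζ, E)`, with `a = 1/γ`. -/
noncomputable def profile (a s : ℝ) : ℝ := min (s ^ (-(1 / 2) : ℝ)) (s ^ (2 * a - 2))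

variable {a s : ℝ}

lemma profile_of_le_one (ha : a ≤ 3 / 4) (hs : 0 < s) (hs1 : s ≤ 1) :
    profile a s = s ^ (-(1 / 2) : ℝ) :=
  min_eq_left (Real.rpow_le_rpow_of_exponent_ge hs hs1 (by linarith))

lemma profile_of_one_le (ha : a ≤ 3 / 4) (hs : 1 ≤ s) : profile a s = s ^ (2 * a - 2) :=
  min_eq_right (Real.rpow_le_rpow_of_exponent_le hs (by linarith))

lemma min_one_rpow_le_profile (ha : a ≤ 3 / 4) (hs : 0 < s) :
    min 1 (s ^ (2 * a - 2)) ≤ profile a s := by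
  rcases le_total s 1 with hs1 | hs1
  · rw [profile_of_le_one ha hs hs1]
    exact (min_le_left _ _).trans
      (Real.one_le_rpow_of_pos_of_le_one_of_nonpos hs hs1 (by norm_num))
  · rw [profile_of_one_le ha hs1]
    exact min_le_right _ _

lemma isRadialMajorant_profile (ha : a < 1 / 2) : IsRadialMajorant (profile a) where
  measurable := (measurable_id.pow_const _).min (measurable_id.pow_const _)
  antitoneOn := fun x hx y _ hxy =>
    min_le_min (Real.rpow_le_rpow_of_nonpos hx hxy (by norm_num))
      (Real.rpow_le_rpow_of_nonpos hx hxy (by linarith))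
  nonneg := fun s hs => le_min (Real.rpow_nonneg hs _) (Real.rpow_nonneg hs _)
  integrable_abs := by
    have hpolar := integrable_fun_norm_addHaar (E := ℝ) volume (f := profile a)
    simp only [Module.finrank_self, tsub_self, pow_zero, one_smul, Real.norm_eq_abs] at hpolar
    rw [hpolar, ← Ioc_union_Ioi_eq_Ioi (zero_le_one' ℝ), integrableOn_union]
    have hnear : IntegrableOn (fun s : ℝ => s ^ (-(1 / 2) : ℝ)) (Ioc 0 1) := by
      rw [integrableOn_Ioc_iff_integrableOn_Ioo]
      exact (intervalIntegral.integrableOn_Ioo_rpow_iff zero_lt_one).2 (by norm_num)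
    exact ⟨hnear.congr_fun (fun s hs => (profile_of_le_one (by linarith) hs.1 hs.2).symm)
        measurableSet_Ioc,
      (integrableOn_Ioi_rpow_of_lt (by linarith) zero_lt_one).congr_fun
        (fun s hs => (profile_of_one_le (by linarith) (le_of_lt hs)).symm) measurableSet_Ioi⟩

end RadialMajorant

lemma log_inv_le_mul_rpow_neg {s ε : ℝ} (hs : 0 < s) (hs1 : s ≤ 1) (hε : 0 < ε) (hε1 : ε ≤ 1) :
    Real.log s⁻¹ ≤ ε⁻¹ * ((1 - s) * s ^ (-ε)) := by
  have hpow : 0 < s ^ ε := Real.rpow_pos_of_pos hs ε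
  have hle : s ≤ s ^ ε := by
    simpa only [Real.rpow_one] using Real.rpow_le_rpow_of_exponent_ge hs hs1 hε1
  have hlog : ε * Real.log s⁻¹ ≤ (1 - s) * s ^ (-ε) := calc
    ε * Real.log s⁻¹ = Real.log (s ^ ε)⁻¹ := by
      rw [Real.log_inv, Real.log_inv, Real.log_rpow hs, mul_neg]
    _ ≤ (s ^ ε)⁻¹ - 1 := Real.log_le_sub_one_of_pos (inv_pos.2 hpow)
    _ = (1 - s ^ ε) * s ^ (-ε) := by
      rw [Real.rpow_neg hs.le]
      field_simp
    _ ≤ (1 - s) * s ^ (-ε) := by gcongr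
  rwa [← div_eq_inv_mul, le_div_iff₀' hε]

lemma inv_lt_one_half_of_two_lt {γ : ℝ} (hγ : 2 < γ) : γ⁻¹ < 1 / 2 := by
  rw [one_div]
  exact inv_strictAnti₀ two_pos hγ

namespace OmegaHyp

variable {ω ω' : ℝ → ℝ} {γ u v r : ℝ}

lemma rsNumerator_div_le_of_le (h : OmegaHyp ω ω' γ) (hγ : 2 < γ) (hu : u ∈ Ioo 0 π)
    (hv : v ∈ Ioc 0 π) (huv : u ≤ v) (hr : 0 < r) (hvr : v ≤ u + r) :
    rsNumerator (ω v) (ω u) / r ^ 2 ≤ 3 * γ ^ 2 * ω' u ^ 2 * profile γ⁻¹ (r / u) := by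
  have hu0 : 0 < u := hu.1
  have hω' := h.deriv_nonneg hu
  have hs : 0 < r / u := div_pos hr hu0
  have hmono : ω u ≤ ω v := h.monotoneOn (Ioo_subset_Ioc_self hu) hv huv
  have hωu := h.pos (Ioo_subset_Ioc_self hu)
  have hlipschitz := rsNumerator_div_sq_le_of_sub_le hωu hmono hr (B := γ * ω' u) <| calc
    ω v - ω u ≤ ω' u * (v - u) := h.sub_le_deriv_mul_sub (by linarith) hu hv
    _ ≤ r * (1 * ω' u) := by
      rw [one_mul, mul_comm]
      gcongr
      linarith
    _ ≤ r * (γ * ω' u) := by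
      gcongr
      linarith
  have hholder := rsNumerator_div_sq_le_of_sub_le hωu hmono hr
      (B := γ * ω' u * (r / u) ^ (γ⁻¹ - 1)) <| calc
    ω v - ω u ≤ γ * u * ω' u * ((v - u) / u) ^ γ⁻¹ :=
      h.sub_le_mul_rpow_sub_div (by linarith) hu hv huv
    _ ≤ γ * u * ω' u * (r / u) ^ γ⁻¹ := by
      have := sub_nonneg.2 huv
      gcongr
      linarith
    _ = r * (γ * ω' u * (r / u) ^ (γ⁻¹ - 1)) := by
      rw [Real.rpow_sub_one hs.ne']
      field_simp
  have hsq : ((r / u) ^ (γ⁻¹ - 1)) ^ 2 = (r / u) ^ (2 * γ⁻¹ - 2) := by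
    rw [← Real.rpow_mul_natCast hs.le]
    ring_nf
  rw [mul_pow, hsq] at hholder
  have hγ₀ : γ⁻¹ ≤ 3 / 4 := by linarith [inv_lt_one_half_of_two_lt hγ]
  calc _ ≤ 3 * (γ * ω' u) ^ 2 * min 1 ((r / u) ^ (2 * γ⁻¹ - 2)) := by
        rw [mul_min_of_nonneg _ _ (by positivity), mul_one, mul_assoc 3]
        exact le_min hlipschitz hholder
    _ ≤ 3 * (γ * ω' u) ^ 2 * profile γ⁻¹ (r / u) := by
        gcongr
        exact min_one_rpow_le_profile hγ₀ hs
    _ = _ := by ring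

lemma rsNumerator_div_le_of_lt (h : OmegaHyp ω ω' γ) (hγ : 2 < γ) (hu : u ∈ Ioo 0 π)
    (hv : 0 < v) (hvu : v < u) (hr : u - v ≤ r) :
    rsNumerator (ω v) (ω u) / r ^ 2 ≤ 32 * ω' u ^ 2 * profile γ⁻¹ (v / u) := by
  have hu0 : 0 < u := hu.1
  have hv_mem : v ∈ Ioc 0 π := ⟨hv, (hvu.trans hu.2).le⟩
  have hωu := h.pos (Ioo_subset_Ioc_self hu)
  have hωv := h.pos hv_mem
  have hmono : ω v ≤ ω u := h.monotoneOn hv_mem (Ioo_subset_Ioc_self hu) hvu.le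
  have hω' := h.deriv_nonneg hu
  -- The exponent `-1/4`, squared below, yields the singularity `s ^ (-1/2)` of `profile`.
  have hlog := log_inv_le_mul_rpow_neg (div_pos hv hu0) ((div_le_one hu0).2 hvu.le)
    (ε := 1 / 4) (by norm_num) (by norm_num)
  rw [inv_div] at hlog
  have hlog_ω : Real.log (ω u / ω v) ≤ 4 * ω' u / ω u * (r * (v / u) ^ (-(1 / 4) : ℝ)) := calc
    _ ≤ u * ω' u / ω u * Real.log (u / v) := h.log_div_le hu hv hvu.le
    _ ≤ u * ω' u / ω u * ((1 / 4)⁻¹ * ((1 - v / u) * (v / u) ^ (-(1 / 4) : ℝ))) := by gcongr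
    _ = 4 * ω' u / ω u * ((u - v) * (v / u) ^ (-(1 / 4) : ℝ)) := by
      field_simp
    _ ≤ _ := by gcongr
  have hpow : ((v / u) ^ (-(1 / 4) : ℝ)) ^ 2 = profile γ⁻¹ (v / u) := by
    rw [profile_of_le_one ?_ (div_pos hv hu0) ((div_le_one hu0).2 hvu.le),
      ← Real.rpow_mul_natCast (by positivity)]
    · norm_num
    · linarith [inv_lt_one_half_of_two_lt hγ]
  rw [div_le_iff₀ (by nlinarith)]
  calc rsNumerator (ω v) (ω u) ≤ 2 * ω u ^ 2 * Real.log (ω u / ω v) ^ 2 :=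
        rsNumerator_le_two_mul_sq_log hωv hmono
    _ ≤ 2 * ω u ^ 2 * (4 * ω' u / ω u * (r * (v / u) ^ (-(1 / 4) : ℝ))) ^ 2 := by
        gcongr
        exact Real.log_nonneg ((one_le_div hωv).2 hmono)
    _ = 32 * ω' u ^ 2 * ((v / u) ^ (-(1 / 4) : ℝ)) ^ 2 * r ^ 2 := by
        field_simp
        ring
    _ = _ := by rw [hpow]

end OmegaHyp

section UnitCircle

lemma cpt_eq_circleMap : cpt = circleMap 0 1 := by
  funext θ
  simp only [cpt, circleMap, zero_add, Complex.ofReal_one, one_mul]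

lemma continuous_cpt : Continuous cpt :=
  cpt_eq_circleMap ▸ continuous_circleMap 0 1

lemma periodic_cpt : Function.Periodic cpt (2 * π) :=
  cpt_eq_circleMap ▸ periodic_circleMap 0 1

lemma range_cpt : range cpt = circleT := by
  rw [cpt_eq_circleMap, range_circleMap, abs_one, circleT]

lemma cpt_mem_circleT (θ : ℝ) : cpt θ ∈ circleT := range_cpt ▸ mem_range_self θ

lemma exists_mem_Ioc_cpt_eq {z : ℂ} (hz : z ∈ circleT) (t : ℝ) :
    ∃ θ ∈ Ioc t (t + 2 * π), cpt θ = z := by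
  rwa [← range_cpt, ← periodic_cpt.image_Ioc two_pi_pos t] at hz

lemma norm_cpt_sub (x y : ℝ) : ‖cpt x - cpt y‖ = 2 * |Real.sin ((x - y) / 2)| := by
  have hfactor : cpt x - cpt y = cpt y * (Complex.exp (Complex.I * ((x - y : ℝ) : ℂ)) - 1) := by
    rw [cpt, cpt, mul_sub, ← Complex.exp_add, mul_one]
    congr 2
    push_cast
    ring
  rw [hfactor, norm_mul, mem_sphere_zero_iff_norm.1 (cpt_mem_circleT y), one_mul,
    Complex.norm_exp_I_mul_ofReal_sub_one, norm_mul, Real.norm_two, Real.norm_eq_abs]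

lemma norm_cpt_sub_le (x y : ℝ) : ‖cpt x - cpt y‖ ≤ |x - y| := by
  have hsin := Real.abs_sin_le_abs (x := (x - y) / 2)
  rw [abs_div, abs_two] at hsin
  rw [norm_cpt_sub]
  linarith

lemma mul_abs_sub_le_norm_cpt_sub {x y : ℝ} (h : |x - y| ≤ π) :
    2 / π * |x - y| ≤ ‖cpt x - cpt y‖ := by
  have hhalf : |(x - y) / 2| = |x - y| / 2 := by rw [abs_div, abs_two]
  have hjordan := Real.mul_abs_le_abs_sin (x := (x - y) / 2) (by linarith)
  rw [hhalf] at hjordan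
  rw [norm_cpt_sub]
  linarith

lemma norm_cpt_sub_of_le {x y : ℝ} (hxy : x ≤ y) (hyx : y ≤ x + 2 * π) :
    ‖cpt x - cpt y‖ = 2 * Real.sin ((y - x) / 2) := by
  rw [norm_sub_rev, norm_cpt_sub, abs_of_nonneg]
  exact Real.sin_nonneg_of_nonneg_of_le_pi (by linarith) (by linarith)

end UnitCircle

section ComplementaryArc

lemma exists_mem_Icc_of_isClosed {X : Type*} [ConditionallyCompleteLinearOrder X]
    [TopologicalSpace X] [OrderTopology X] {S : Set X} {x : X} (hS : IsClosed S)
    (hlower : (S ∩ Iic x).Nonempty) (hupper : (S ∩ Ici x).Nonempty) :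
    ∃ a ∈ S, ∃ b ∈ S, x ∈ Icc a b ∧ Disjoint (Ioo a b) S := by
  obtain ⟨⟨haS, hax⟩, ha⟩ := (hS.inter isClosed_Iic).isGreatest_csSup hlower ⟨x, fun _ h => h.2⟩
  obtain ⟨⟨hbS, hxb⟩, hb⟩ := (hS.inter isClosed_Ici).isLeast_csInf hupper ⟨x, fun _ h => h.2⟩
  refine ⟨_, haS, _, hbS, ⟨hax, hxb⟩, Set.disjoint_left.2 fun y hy hyS => ?_⟩
  rcases le_total y x with hyx | hxy
  · exact hy.1.not_ge (ha ⟨hyS, hyx⟩)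
  · exact hy.2.not_ge (hb ⟨hyS, hxy⟩)

variable {α β x y : ℝ}

lemma circleT_subset_image_Icc_union (α β : ℝ) :
    circleT ⊆ cpt '' Icc α β ∪ cpt '' Icc β (α + 2 * π) := by
  intro z hz
  obtain ⟨θ, hθ, rfl⟩ := exists_mem_Ioc_cpt_eq hz α
  exact (le_total θ β).imp (fun h => ⟨θ, ⟨hθ.1.le, h⟩, rfl⟩) fun h => ⟨θ, ⟨h, hθ.2⟩, rfl⟩

lemma image_Icc_inter_image_Icc_subset :
    cpt '' Icc α β ∩ cpt '' Icc β (α + 2 * π) ⊆ {cpt α, cpt β} := by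
  rintro _ ⟨⟨x, hx, rfl⟩, y, hy, hxy⟩
  rcases hx.1.eq_or_lt with rfl | hαx
  · exact Or.inl rfl
  · have hlt : |y - x| < 2 * π := by
      rw [abs_of_nonneg (by linarith [hx.2, hy.1])]
      linarith [hy.2]
    rw [cpt_eq_circleMap] at hxy
    have hyx : y = x := eq_of_circleMap_eq one_ne_zero hlt hxy
    exact Or.inr (congrArg cpt (le_antisymm hx.2 (hyx ▸ hy.1)))

lemma subset_image_Icc_of_isPreconnected {A : Set ℂ} (hA : IsPreconnected A) (hAT : A ⊆ circleT)
    (hα : cpt α ∉ A) (hβ : cpt β ∉ A) (hmeet : (A ∩ cpt '' Icc α β).Nonempty) :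
    A ⊆ cpt '' Icc α β := by
  have hclosed : ∀ s t : ℝ, IsClosed (cpt '' Icc s t) := fun s t =>
    (isCompact_Icc.image continuous_cpt).isClosed
  have hcover := hAT.trans (circleT_subset_image_Icc_union α β)
  intro z hz
  by_contra hzα
  obtain ⟨w, hw, hwαβ⟩ := isPreconnected_closed_iff.1 hA _ _ (hclosed α β)
    (hclosed β (α + 2 * π)) hcover hmeet ⟨z, hz, (hcover hz).resolve_left hzα⟩
  rcases image_Icc_inter_image_Icc_subset hwαβ with rfl | rfl
  exacts [hα hw, hβ hw]

-- `y` lies between `β` and the next copy `α + 2π` of `α`, and there the chord length from `x` is a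
-- concave function of the endpoint.
lemma min_norm_cpt_sub_le (hx : x ∈ Icc α β) (hy : y ∈ Icc β (α + 2 * π)) :
    min ‖cpt x - cpt α‖ ‖cpt x - cpt β‖ ≤ ‖cpt x - cpt y‖ := by
  obtain ⟨hαx, hxβ⟩ := hx
  obtain ⟨hβy, hyα⟩ := hy
  have hsin := strictConcaveOn_sin_Icc.concaveOn.min_le_of_mem_Icc
    (x := (β - x) / 2) (y := (α + 2 * π - x) / 2) (z := (y - x) / 2)
    ⟨by linarith, by linarith⟩ ⟨by linarith, by linarith⟩ ⟨by linarith, by linarith⟩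
  rw [← periodic_cpt α, norm_cpt_sub_of_le (by linarith) (by linarith),
    norm_cpt_sub_of_le hxβ (by linarith), norm_cpt_sub_of_le (by linarith) (by linarith),
    min_comm, ← mul_min_of_nonneg _ _ zero_le_two]
  exact mul_le_mul_of_nonneg_left hsin zero_le_two

variable {E : Set ℂ} {ζ : ℂ}

lemma exists_compArc_subset_image_Icc (hE : IsClosed E) (hET : E ⊆ circleT) (hne : E.Nonempty)
    (hζ : ζ ∈ circleT \ E) :
    ∃ α β, cpt α ∈ E ∧ cpt β ∈ E ∧ compArc E ζ ⊆ cpt '' Icc α β ∧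
      ∀ θ ∈ Ioo α β, cpt θ ∉ E := by
  obtain ⟨x, -, rfl⟩ := exists_mem_Ioc_cpt_eq hζ.1 0
  obtain ⟨e, he⟩ := hne
  obtain ⟨y, hy, rfl⟩ := exists_mem_Ioc_cpt_eq (hET he) (x - 2 * π)
  have hyx : y ≤ x := by linarith [hy.2]
  have hxy : x ≤ y + 2 * π := by linarith [hy.1]
  have hper : cpt (y + 2 * π) ∈ E := (periodic_cpt y).symm ▸ he
  obtain ⟨α, hα, β, hβ, hx, hdisj⟩ := exists_mem_Icc_of_isClosed (hE.preimage continuous_cpt)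
    ⟨y, he, hyx⟩ ⟨y + 2 * π, hper, hxy⟩
  have hsub : compArc E (cpt x) ⊆ circleT \ E := connectedComponentIn_subset _ _
  exact ⟨α, β, hα, hβ, subset_image_Icc_of_isPreconnected isPreconnected_connectedComponentIn
      (hsub.trans sdiff_subset) (fun h => (hsub h).2 hα) (fun h => (hsub h).2 hβ)
      ⟨cpt x, mem_connectedComponentIn hζ, x, hx, rfl⟩,
    fun θ hθ => Set.disjoint_left.1 hdisj hθ⟩

lemma exists_dE_eq_min_on_compArc (hE : IsClosed E) (hET : E ⊆ circleT) (hne : E.Nonempty)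
    (hζ : ζ ∈ circleT \ E) :
    ∃ a ∈ E, ∃ b ∈ E, ∀ z ∈ compArc E ζ, dE E z = min ‖z - a‖ ‖z - b‖ := by
  obtain ⟨α, β, hα, hβ, hsub, hgap⟩ := exists_compArc_subset_image_Icc hE hET hne hζ
  have hle : ∀ z, ∀ e ∈ E, dE E z ≤ ‖z - e‖ := fun z e he =>
    (Metric.infDist_le_dist_of_mem he).trans_eq (dist_eq_norm z e)
  refine ⟨cpt α, hα, cpt β, hβ, fun z hz => le_antisymm (le_min (hle z _ hα) (hle z _ hβ)) ?_⟩
  obtain ⟨x, hx, rfl⟩ := hsub hz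
  obtain ⟨p, hp, hdist⟩ := hE.exists_infDist_eq_dist hne (cpt x)
  obtain ⟨y, hy, rfl⟩ := exists_mem_Ioc_cpt_eq (hET hp) α
  have hβy : β ≤ y := not_lt.1 fun hyβ => hgap y ⟨hy.1, hyβ⟩ hp
  rw [dE, hdist, dist_eq_norm]
  exact min_norm_cpt_sub_le hx ⟨hβy, hy.2⟩

end ComplementaryArc

section Measurability

variable {E : Set ℂ}

lemma measurableSet_circleT : MeasurableSet circleT := Metric.isClosed_sphere.measurableSet

lemma measurableSet_compArc (hE : MeasurableSet E) (ζ : ℂ) : MeasurableSet (compArc E ζ) := by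
  by_cases hζ : ζ ∈ circleT \ E
  · rw [compArc, connectedComponentIn_eq_image hζ]
    exact (measurableSet_circleT.diff hE).subtype_image isClosed_connectedComponent.measurableSet
  · rw [compArc, connectedComponentIn_eq_empty hζ]
    exact MeasurableSet.empty

lemma measurableSet_SigmaSet (hE : MeasurableSet E) (ζ : ℂ) : MeasurableSet (SigmaSet E ζ) :=
  (measurableSet_circleT.diff (measurableSet_compArc hE ζ)).inter
    (measurableSet_le measurable_const (Metric.continuous_infDist_pt E).measurable)

end Measurability

section CircleIntegral

lemma circInt_eq_setIntegral_Ioc (f : ℂ → ℝ) (t : ℝ) :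
    circInt f = ∫ θ in Ioc t (t + 2 * π), f (cpt θ) := by
  have hshift := (periodic_cpt.comp f).intervalIntegral_add_eq 0 t
  rwa [zero_add, intervalIntegral.integral_of_le two_pi_pos.le,
    intervalIntegral.integral_of_le (by linarith [pi_pos])] at hshift

lemma integrableOn_comp_cpt_iff {f : ℂ → ℝ} (t : ℝ) :
    IntegrableOn (fun θ => f (cpt θ)) (Ioc 0 (2 * π)) ↔
      IntegrableOn (fun θ => f (cpt θ)) (Ioc t (t + 2 * π)) := by
  have hshift := (periodic_cpt.comp f).intervalIntegrable_iff (t₁ := 0) (t₂ := t)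
  rwa [zero_add, intervalIntegrable_iff_integrableOn_Ioc_of_le two_pi_pos.le,
    intervalIntegrable_iff_integrableOn_Ioc_of_le (by linarith [pi_pos])] at hshift

lemma ae_cpt_notMem {E : Set ℂ} (hE : MeasureZeroOnCircle E) : ∀ᵐ θ, cpt θ ∉ E := by
  refine measure_eq_zero_iff_ae_notMem.1 <|
    (isAddFundamentalDomain_Ioc two_pi_pos 0).measure_zero_of_invariant (cpt ⁻¹' E) ?_ ?_
  · rintro ⟨_, k, rfl⟩
    ext θ
    have hshift : cpt (-(k • (2 * π)) + θ) = cpt θ := by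
      rw [neg_add_eq_sub, periodic_cpt.sub_zsmul_eq]
    rw [mem_vadd_set_iff_neg_vadd_mem]
    exact iff_of_eq (congrArg (· ∈ E) hshift)
  · rwa [zero_add, inter_comm]

lemma two_mul_mul_le_circInt {f : ℂ → ℝ} {φ s m : ℝ} (hs : 0 ≤ s) (hsπ : s ≤ π)
    (hf : IntegrableOn (fun θ => f (cpt θ)) (Ioc 0 (2 * π))) (hf₀ : ∀ᵐ θ, 0 ≤ f (cpt θ))
    (hm : ∀ᵐ θ, |θ - φ| ≤ s → m ≤ f (cpt θ)) : 2 * s * m ≤ circInt f := by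
  rw [integrableOn_comp_cpt_iff (φ - π)] at hf
  have hsub : Ioc (φ - s) (φ + s) ⊆ Ioc (φ - π) (φ - π + 2 * π) :=
    Ioc_subset_Ioc (by linarith) (by linarith)
  calc 2 * s * m = ∫ _ in Ioc (φ - s) (φ + s), m := by
        rw [setIntegral_const, Real.volume_real_Ioc_of_le (by linarith), smul_eq_mul]
        ring
    _ ≤ ∫ θ in Ioc (φ - s) (φ + s), f (cpt θ) := by
        refine setIntegral_mono_on_ae (integrableOn_const (by simp)) (hf.mono_set hsub)
          measurableSet_Ioc ?_
        filter_upwards [hm] with θ hθ hmem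
        exact hθ (abs_le.2 ⟨by linarith [hmem.1], by linarith [hmem.2]⟩)
    _ ≤ ∫ θ in Ioc (φ - π) (φ - π + 2 * π), f (cpt θ) :=
        setIntegral_mono_set hf (ae_restrict_of_ae hf₀) hsub.eventuallyLE
    _ = circInt f := (circInt_eq_setIntegral_Ioc f _).symm

end CircleIntegral

namespace IsRadialMajorant

variable {ψ : ℝ → ℝ} {u : ℝ} {w : ℂ}

lemma norm_cpt_sub_div_le (hψ : IsRadialMajorant ψ) (hu : 0 < u) {θ φ : ℝ} (hθφ : |θ - φ| ≤ π)
    (hne : θ ≠ φ) : ψ (‖cpt θ - cpt φ‖ / u) ≤ ψ |(π * u / 2)⁻¹ * (θ - φ)| := by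
  have : 0 < |θ - φ| := abs_pos.2 (sub_ne_zero.2 hne)
  have hchord := mul_abs_sub_le_norm_cpt_sub hθφ
  have hscale : |(π * u / 2)⁻¹ * (θ - φ)| = 2 / π * |θ - φ| / u := by
    rw [abs_mul, abs_of_pos (by positivity)]
    field_simp
  rw [hscale]
  refine hψ.antitoneOn (mem_Ioi.2 (by positivity)) (mem_Ioi.2 (div_pos ?_ hu)) (by gcongr)
  exact lt_of_lt_of_le (by positivity) hchord

lemma integrable_rescale (hψ : IsRadialMajorant ψ) (hu : 0 < u) (φ : ℝ) :
    Integrable fun θ => ψ |(π * u / 2)⁻¹ * (θ - φ)| :=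
  (hψ.integrable_abs.comp_mul_left' (by positivity)).comp_sub_right φ

lemma integral_rescale (ψ : ℝ → ℝ) (hu : 0 < u) (φ : ℝ) :
    ∫ θ, ψ |(π * u / 2)⁻¹ * (θ - φ)| = π * u / 2 * ∫ x : ℝ, ψ |x| := by
  rw [integral_sub_right_eq_self (fun θ => ψ |(π * u / 2)⁻¹ * θ|) φ,
    Measure.integral_comp_mul_left (fun x => ψ |x|), inv_inv, abs_of_pos (by positivity),
    smul_eq_mul]

lemma ae_le_rescale (hψ : IsRadialMajorant ψ) (hu : 0 < u) (φ : ℝ) :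
    ∀ᵐ θ ∂volume.restrict (Ioc (φ - π) (φ - π + 2 * π)),
      ψ (‖cpt θ - cpt φ‖ / u) ≤ ψ |(π * u / 2)⁻¹ * (θ - φ)| := by
  filter_upwards [ae_restrict_mem measurableSet_Ioc,
    ae_restrict_of_ae (Measure.ae_ne volume φ)] with θ hθ hne
  exact hψ.norm_cpt_sub_div_le hu (abs_le.2 ⟨by linarith [hθ.1], by linarith [hθ.2]⟩) hne

lemma integrableOn_norm_cpt_sub_div (hψ : IsRadialMajorant ψ) (hu : 0 < u) (hw : w ∈ circleT) :
    IntegrableOn (fun θ => ψ (‖cpt θ - w‖ / u)) (Ioc 0 (2 * π)) := by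
  obtain ⟨φ, -, rfl⟩ := exists_mem_Ioc_cpt_eq hw 0
  rw [integrableOn_comp_cpt_iff (f := fun z => ψ (‖z - cpt φ‖ / u)) (φ - π)]
  refine (hψ.integrable_rescale hu φ).integrableOn.mono' ?_ ?_
  · exact (hψ.measurable.comp
      ((continuous_cpt.sub continuous_const).norm.div_const u).measurable).aestronglyMeasurable
  · filter_upwards [hψ.ae_le_rescale hu φ] with θ hθ
    rwa [Real.norm_of_nonneg (hψ.nonneg _ (by positivity))]

lemma circInt_norm_sub_div_le (hψ : IsRadialMajorant ψ) (hu : 0 < u) (hw : w ∈ circleT) :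
    circInt (fun z => ψ (‖z - w‖ / u)) ≤ π * u / 2 * ∫ x : ℝ, ψ |x| := by
  obtain ⟨φ, -, rfl⟩ := exists_mem_Ioc_cpt_eq hw 0
  rw [circInt_eq_setIntegral_Ioc _ (φ - π), ← integral_rescale ψ hu φ]
  calc _ ≤ ∫ θ in Ioc (φ - π) (φ - π + 2 * π), ψ |(π * u / 2)⁻¹ * (θ - φ)| :=
        integral_mono_of_nonneg (Filter.Eventually.of_forall fun θ => hψ.nonneg _ (by positivity))
          (hψ.integrable_rescale hu φ).integrableOn (hψ.ae_le_rescale hu φ)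
    _ ≤ _ := setIntegral_le_integral (hψ.integrable_rescale hu φ)
        (Filter.Eventually.of_forall fun θ => hψ.nonneg _ (abs_nonneg _))

lemma circIntOn_le (hψ : IsRadialMajorant ψ) (hu : 0 < u) {Λ : Set ℂ} (hΛ : MeasurableSet Λ)
    {F : Finset ℂ} (hF : ↑F ⊆ circleT) {f : ℂ → ℝ} {c : ℝ} (hc : 0 ≤ c)
    (hf₀ : ∀ z ∈ Λ, 0 ≤ f z) (hf : ∀ z ∈ Λ, ∃ w ∈ F, f z ≤ c * ψ (‖z - w‖ / u)) :
    circIntOn Λ f ≤ F.card * (c * (π * u / 2 * ∫ x : ℝ, ψ |x|)) := by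
  set g : ℂ → ℝ := fun z => ∑ w ∈ F, c * ψ (‖z - w‖ / u)
  have hterm : ∀ z w : ℂ, 0 ≤ c * ψ (‖z - w‖ / u) := fun z w =>
    mul_nonneg hc (hψ.nonneg _ (div_nonneg (norm_nonneg _) hu.le))
  have hterm_int : ∀ w ∈ F, IntegrableOn (fun θ => c * ψ (‖cpt θ - w‖ / u)) (Ioc 0 (2 * π)) :=
    fun w hw => (hψ.integrableOn_norm_cpt_sub_div hu (hF hw)).const_mul c
  have hg : IntegrableOn (fun θ => g (cpt θ)) (Ioc 0 (2 * π)) := integrable_finsetSum F hterm_int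
  have hmeas : MeasurableSet {θ ∈ Ioc 0 (2 * π) | cpt θ ∈ Λ} :=
    measurableSet_Ioc.inter (continuous_cpt.measurable hΛ)
  have hfg : ∀ z ∈ Λ, f z ≤ g z := fun z hz => by
    obtain ⟨w, hw, hfw⟩ := hf z hz
    exact hfw.trans (Finset.single_le_sum (fun w _ => hterm z w) hw)
  calc circIntOn Λ f ≤ ∫ θ in {θ ∈ Ioc 0 (2 * π) | cpt θ ∈ Λ}, g (cpt θ) :=
        integral_mono_of_nonneg (ae_restrict_of_forall_mem hmeas fun θ hθ => hf₀ _ hθ.2)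
          (hg.mono_set (sep_subset _ _)) (ae_restrict_of_forall_mem hmeas fun θ hθ => hfg _ hθ.2)
    _ ≤ circInt g :=
        setIntegral_mono_set hg
          (Filter.Eventually.of_forall fun θ => Finset.sum_nonneg fun w _ => hterm _ w)
          (sep_subset _ _).eventuallyLE
    _ = ∑ w ∈ F, c * circInt (fun z => ψ (‖z - w‖ / u)) := by
        simp only [circInt, g, integral_finsetSum F hterm_int, integral_const_mul]
    _ ≤ F.card • (c * (π * u / 2 * ∫ x : ℝ, ψ |x|)) :=
        Finset.sum_le_card_nsmul F _ _ fun _ hw =>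
          mul_le_mul_of_nonneg_left (hψ.circInt_norm_sub_div_le hu (hF hw)) hc
    _ = _ := nsmul_eq_mul _ _

end IsRadialMajorant

section LocalDirichletIntegral

variable {E : Set ℂ} {ζ z : ℂ}

lemma dE_mem_Ioo (hE : IsClosed E) (hET : E ⊆ circleT) (hne : E.Nonempty)
    (hz : z ∈ circleT \ E) : dE E z ∈ Ioo 0 π := by
  refine ⟨(hE.notMem_iff_infDist_pos hne).1 hz.2, ?_⟩
  obtain ⟨e, he⟩ := hne
  calc dE E z ≤ dist z e := Metric.infDist_le_dist_of_mem he
    _ ≤ dist z 0 + dist e 0 := dist_triangle_right z e 0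
    _ = 2 := by
      rw [Metric.mem_sphere.1 hz.1, Metric.mem_sphere.1 (hET he)]
      norm_num
    _ < π := by linarith [pi_gt_three]

lemma dE_le_dE_add_norm_sub (E : Set ℂ) (z w : ℂ) : dE E z ≤ dE E w + ‖z - w‖ :=
  (Metric.infDist_le_infDist_add_dist (s := E)).trans_eq (by rw [dist_eq_norm]; rfl)

lemma RSker_empty (ω : ℝ → ℝ) (ζ z : ℂ) : RSker ω ∅ ζ z = 0 := by
  have hlog : Real.log (ω 0 / ω 0) = 0 := by
    rcases eq_or_ne (ω 0) 0 with h₀ | h₀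
    · rw [h₀, div_zero, Real.log_zero]
    · rw [div_self h₀, Real.log_one]
  simp only [RSker, dE, Metric.infDist_empty, hlog, sub_self, mul_zero, zero_div]

variable {ω ω' : ℝ → ℝ} {γ : ℝ}

lemma OmegaHyp.pos_dE (hω : OmegaHyp ω ω' γ) (hE : IsClosed E) (hET : E ⊆ circleT)
    (hne : E.Nonempty) (hz : z ∈ circleT \ E) : 0 < ω (dE E z) :=
  hω.pos (Ioo_subset_Ioc_self (dE_mem_Ioo hE hET hne hz))

lemma RSker_nonneg (hω : OmegaHyp ω ω' γ) (hE : IsClosed E) (hET : E ⊆ circleT)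
    (hne : E.Nonempty) (hζ : ζ ∈ circleT \ E) (hz : z ∈ circleT \ E) : 0 ≤ RSker ω E ζ z := by
  rw [RSker_eq_rsNumerator_div]
  exact div_nonneg
    (rsNumerator_nonneg (hω.pos_dE hE hET hne hz) (hω.pos_dE hE hET hne hζ)) (sq_nonneg _)

lemma RSker_le_of_dE_le (hω : OmegaHyp ω ω' γ) (hγ : 2 < γ) (hE : IsClosed E)
    (hET : E ⊆ circleT) (hne : E.Nonempty) (hζ : ζ ∈ circleT \ E) (hz : z ∈ circleT \ E)
    (hle : dE E ζ ≤ dE E z) :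
    RSker ω E ζ z ≤
      (3 * γ ^ 2 + 32) * ω' (dE E ζ) ^ 2 * profile γ⁻¹ (‖z - ζ‖ / dE E ζ) := by
  have hζ_mem := dE_mem_Ioo hE hET hne hζ
  have hprofile : 0 ≤ profile γ⁻¹ (‖z - ζ‖ / dE E ζ) :=
    (isRadialMajorant_profile (inv_lt_one_half_of_two_lt hγ)).nonneg _
      (div_nonneg (norm_nonneg _) hζ_mem.1.le)
  rcases eq_or_ne z ζ with rfl | hne_ζ
  · rw [RSker_eq_rsNumerator_div, sub_self, norm_zero, sq, zero_mul, div_zero]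
    rw [sub_self, norm_zero] at hprofile
    positivity
  · rw [RSker_eq_rsNumerator_div, norm_sub_rev]
    refine (hω.rsNumerator_div_le_of_le hγ hζ_mem
      (Ioo_subset_Ioc_self (dE_mem_Ioo hE hET hne hz)) hle (norm_pos_iff.2 (sub_ne_zero.2 hne_ζ))
      (dE_le_dE_add_norm_sub E z ζ)).trans ?_
    gcongr
    linarith

lemma RSker_le_of_dE_lt (hω : OmegaHyp ω ω' γ) (hγ : 2 < γ) (hE : IsClosed E)
    (hET : E ⊆ circleT) (hne : E.Nonempty) (hζ : ζ ∈ circleT \ E) {d : ℝ} (hd : 0 < d)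
    (hdz : d ≤ dE E z) (hlt : dE E z < dE E ζ) :
    RSker ω E ζ z ≤ (3 * γ ^ 2 + 32) * ω' (dE E ζ) ^ 2 * profile γ⁻¹ (d / dE E ζ) := by
  have hψ := isRadialMajorant_profile (inv_lt_one_half_of_two_lt hγ)
  have hζ_mem := dE_mem_Ioo hE hET hne hζ
  have hz₀ : 0 < dE E z := hd.trans_le hdz
  have hprofile : profile γ⁻¹ (dE E z / dE E ζ) ≤ profile γ⁻¹ (d / dE E ζ) :=
    hψ.antitoneOn (div_pos hd hζ_mem.1) (div_pos hz₀ hζ_mem.1)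
      (div_le_div_of_nonneg_right hdz hζ_mem.1.le)
  have hprofile₀ := hψ.nonneg _ (div_pos hz₀ hζ_mem.1).le
  rw [RSker_eq_rsNumerator_div]
  calc _ ≤ 32 * ω' (dE E ζ) ^ 2 * profile γ⁻¹ (dE E z / dE E ζ) :=
        hω.rsNumerator_div_le_of_lt hγ hζ_mem hz₀ hlt
          (by linarith [dE_le_dE_add_norm_sub E ζ z])
    _ ≤ _ := by
        gcongr
        linarith [sq_nonneg γ]

lemma locDirOn_le_of_RSker_le (hω : OmegaHyp ω ω' γ) (hE : IsClosed E)
    (hET : E ⊆ circleT) (hne : E.Nonempty) (hζ : ζ ∈ circleT \ E) {ψ : ℝ → ℝ}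
    (hψ : IsRadialMajorant ψ) {Λ : Set ℂ} (hΛ : MeasurableSet Λ) (hΛE : Λ ⊆ circleT \ E)
    {F : Finset ℂ} (hF : ↑F ⊆ circleT) {K : ℝ} (hK : 0 ≤ K)
    (hle : ∀ z ∈ Λ, ∃ w ∈ F,
      RSker ω E ζ z ≤ K * ω' (dE E ζ) ^ 2 * ψ (‖z - w‖ / dE E ζ)) :
    locDirOn ω E Λ ζ ≤
      F.card * K / 4 * (∫ x : ℝ, ψ |x|) * (dE E ζ * ω' (dE E ζ) ^ 2) := by
  have hint := hψ.circIntOn_le (dE_mem_Ioo hE hET hne hζ).1 hΛ hF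
    (mul_nonneg hK (sq_nonneg (ω' (dE E ζ))))
    (fun z hz => RSker_nonneg hω hE hET hne hζ (hΛE hz)) hle
  refine (mul_le_mul_of_nonneg_left hint (by positivity)).trans_eq ?_
  field_simp
  ring

lemma SigmaSet_subset (hE : IsClosed E) (hET : E ⊆ circleT) (hne : E.Nonempty)
    (hζ : ζ ∈ circleT \ E) : SigmaSet E ζ ⊆ circleT \ E := fun _ hz =>
  ⟨hz.1.1, (hE.notMem_iff_infDist_pos hne).2
    ((dE_mem_Ioo hE hET hne hζ).1.trans_le hz.2)⟩

lemma locDirOn_SigmaSet_le (hω : OmegaHyp ω ω' γ) (hγ : 2 < γ) (hE : IsClosed E)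
    (hET : E ⊆ circleT) (hne : E.Nonempty) (hζ : ζ ∈ circleT \ E) :
    locDirOn ω E (SigmaSet E ζ) ζ ≤ (3 * γ ^ 2 + 32) / 4 * (∫ x : ℝ, profile γ⁻¹ |x|) *
      (dE E ζ * ω' (dE E ζ) ^ 2) := by
  have hsub := SigmaSet_subset hE hET hne hζ
  have hbound := locDirOn_le_of_RSker_le hω hE hET hne hζ
    (isRadialMajorant_profile (inv_lt_one_half_of_two_lt hγ))
    (measurableSet_SigmaSet hE.measurableSet ζ) hsub (F := {ζ}) (by simpa using hζ.1)
    (K := 3 * γ ^ 2 + 32) (by positivity) fun z hz =>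
      ⟨ζ, Finset.mem_singleton_self ζ, RSker_le_of_dE_le hω hγ hE hET hne hζ (hsub hz) hz.2⟩
  rwa [Finset.card_singleton, Nat.cast_one, one_mul] at hbound

lemma locDirOn_compArc_le (hω : OmegaHyp ω ω' γ) (hγ : 2 < γ) (hE : IsClosed E)
    (hET : E ⊆ circleT) (hne : E.Nonempty) (hζ : ζ ∈ circleT \ E) :
    locDirOn ω E (compArc E ζ) ζ ≤ 3 * ((3 * γ ^ 2 + 32) / 4 * ∫ x : ℝ, profile γ⁻¹ |x|) *
      (dE E ζ * ω' (dE E ζ) ^ 2) := by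
  obtain ⟨a, ha, b, hb, hmin⟩ := exists_dE_eq_min_on_compArc hE hET hne hζ
  have hζ_mem := dE_mem_Ioo hE hET hne hζ
  have hψ := isRadialMajorant_profile (inv_lt_one_half_of_two_lt hγ)
  have hsub : compArc E ζ ⊆ circleT \ E := connectedComponentIn_subset _ _
  have hcentres : ↑({ζ, a, b} : Finset ℂ) ⊆ circleT := by
    simp only [Finset.coe_insert, Finset.coe_singleton, insert_subset_iff, singleton_subset_iff]
    exact ⟨hζ.1, hET ha, hET hb⟩
  have hker : ∀ z ∈ compArc E ζ, ∃ w ∈ ({ζ, a, b} : Finset ℂ), RSker ω E ζ z ≤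
      (3 * γ ^ 2 + 32) * ω' (dE E ζ) ^ 2 * profile γ⁻¹ (‖z - w‖ / dE E ζ) := by
    intro z hz
    rcases le_or_gt (dE E ζ) (dE E z) with hle | hlt
    · exact ⟨ζ, by simp, RSker_le_of_dE_le hω hγ hE hET hne hζ (hsub hz) hle⟩
    · have hnearest : ∃ w ∈ ({ζ, a, b} : Finset ℂ), dE E z = ‖z - w‖ := by
        rcases min_choice ‖z - a‖ ‖z - b‖ with h | h
        exacts [⟨a, by simp, (hmin z hz).trans h⟩, ⟨b, by simp, (hmin z hz).trans h⟩]
      obtain ⟨w, hw, hzw⟩ := hnearest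
      have hz₀ := (dE_mem_Ioo hE hET hne (hsub hz)).1
      exact ⟨w, hw, RSker_le_of_dE_lt hω hγ hE hET hne hζ (hzw ▸ hz₀) hzw.ge hlt⟩
  refine (locDirOn_le_of_RSker_le hω hE hET hne hζ hψ (measurableSet_compArc hE.measurableSet ζ)
    hsub hcentres (by positivity) hker).trans ?_
  rw [mul_div_assoc, mul_assoc (Finset.card _ : ℝ)]
  have hintegral : 0 ≤ ∫ x : ℝ, profile γ⁻¹ |x| :=
    integral_nonneg fun x => hψ.nonneg _ (abs_nonneg x)
  have hcard : (({ζ, a, b} : Finset ℂ).card : ℝ) ≤ 3 := by exact_mod_cast Finset.card_le_three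
  have hu := hζ_mem.1.le
  gcongr

-- Away from `ζ` the denominator is harmless; near `ζ` one has `‖z - ζ‖ ≤ dist(z, E)`, so `‖z - ζ‖`
-- may replace `dist(z, E)` in the profile.
lemma RSker_le_profile_add_rsNumerator (hω : OmegaHyp ω ω' γ) (hγ : 2 < γ) (hE : IsClosed E)
    (hET : E ⊆ circleT) (hne : E.Nonempty) (hζ : ζ ∈ circleT \ E) (hz : z ∈ circleT \ E) :
    RSker ω E ζ z ≤ (3 * γ ^ 2 + 32) * ω' (dE E ζ) ^ 2 * profile γ⁻¹ (‖z - ζ‖ / dE E ζ) +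
      4 / dE E ζ ^ 2 * rsNumerator (ω (dE E z)) (ω (dE E ζ)) := by
  have hu := (dE_mem_Ioo hE hET hne hζ).1
  have hprofile := (isRadialMajorant_profile (inv_lt_one_half_of_two_lt hγ)).nonneg
    (‖z - ζ‖ / dE E ζ) (div_nonneg (norm_nonneg _) hu.le)
  have hN := rsNumerator_nonneg (hω.pos_dE hE hET hne hz) (hω.pos_dE hE hET hne hζ)
  rcases le_or_gt (dE E ζ / 2) ‖z - ζ‖ with hfar | hnear
  · refine le_add_of_nonneg_of_le (by positivity) ?_
    rw [RSker_eq_rsNumerator_div, norm_sub_rev]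
    calc _ ≤ rsNumerator (ω (dE E z)) (ω (dE E ζ)) / (dE E ζ / 2) ^ 2 := by gcongr
      _ = _ := by
        field_simp
        ring
  · refine le_add_of_le_of_nonneg ?_ (by positivity)
    rcases le_or_gt (dE E ζ) (dE E z) with hle | hlt
    · exact RSker_le_of_dE_le hω hγ hE hET hne hζ hz hle
    · have hzζ : z ≠ ζ := fun h => hlt.ne (h ▸ rfl)
      refine RSker_le_of_dE_lt hω hγ hE hET hne hζ (norm_pos_iff.2 (sub_ne_zero.2 hzζ)) ?_ hlt
      linarith [dE_le_dE_add_norm_sub E ζ z, norm_sub_rev ζ z]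

lemma integrableOn_rsNumerator (hω : OmegaHyp ω ω' γ) (hE : IsClosed E) (hET : E ⊆ circleT)
    (hne : E.Nonempty) (hE₀ : MeasureZeroOnCircle E) (hlog : LogOmegaInt ω E) {q : ℝ}
    (hq : q ≠ 0) :
    IntegrableOn (fun θ => rsNumerator (ω (dE E (cpt θ))) q) (Ioc 0 (2 * π)) := by
  have hmem : ∀ᵐ θ ∂volume.restrict (Ioc 0 (2 * π)), cpt θ ∈ circleT \ E :=
    ae_restrict_of_ae <| (ae_cpt_notMem hE₀).mono fun θ hθ => ⟨cpt_mem_circleT θ, hθ⟩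
  have hmeas : AEStronglyMeasurable (fun θ => ω (dE E (cpt θ)))
      (volume.restrict (Ioc 0 (2 * π))) := by
    refine (Real.continuous_exp.comp_aestronglyMeasurable hlog.aestronglyMeasurable).congr ?_
    filter_upwards [hmem] with θ hθ
    exact Real.exp_log (hω.pos_dE hE hET hne hθ)
  have hsq : IntegrableOn (fun θ => ω (dE E (cpt θ)) ^ 2) (Ioc 0 (2 * π)) := by
    refine Integrable.of_bound (hmeas.pow 2) (ω π ^ 2) ?_
    filter_upwards [hmem] with θ hθ
    have hpos := hω.pos_dE hE hET hne hθ
    rw [Real.norm_of_nonneg (sq_nonneg _)]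
    gcongr
    exact hω.monotoneOn (Ioo_subset_Ioc_self (dE_mem_Ioo hE hET hne hθ))
      (right_mem_Ioc.2 pi_pos) (dE_mem_Ioo hE hET hne hθ).2.le
  have hconst : ∀ c : ℝ, IntegrableOn (fun _ => c) (Ioc 0 (2 * π)) := fun c =>
    integrableOn_const measure_Ioc_lt_top.ne
  refine ((hsq.sub (hconst (q ^ 2))).sub
    ((hlog.sub (hconst (Real.log q))).const_mul (2 * q ^ 2))).congr ?_
  filter_upwards [hmem] with θ hθ
  simp only [rsNumerator, Pi.sub_apply, Real.log_div (hω.pos_dE hE hET hne hθ).ne' hq]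

lemma integrableOn_RSker (hω : OmegaHyp ω ω' γ) (hγ : 2 < γ) (hE : IsClosed E)
    (hET : E ⊆ circleT) (hne : E.Nonempty) (hE₀ : MeasureZeroOnCircle E)
    (hlog : LogOmegaInt ω E) (hζ : ζ ∈ circleT \ E) :
    IntegrableOn (fun θ => RSker ω E ζ (cpt θ)) (Ioc 0 (2 * π)) := by
  have hN := integrableOn_rsNumerator hω hE hET hne hE₀ hlog (hω.pos_dE hE hET hne hζ).ne'
  have hψ := (isRadialMajorant_profile
    (inv_lt_one_half_of_two_lt hγ)).integrableOn_norm_cpt_sub_div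
      (dE_mem_Ioo hE hET hne hζ).1 hζ.1
  refine Integrable.mono' ((hψ.const_mul ((3 * γ ^ 2 + 32) * ω' (dE E ζ) ^ 2)).add
    (hN.const_mul (4 / dE E ζ ^ 2))) ?_ ?_
  · exact (hN.aemeasurable.div
      ((continuous_const.sub continuous_cpt).norm.pow 2).aemeasurable).aestronglyMeasurable
  · filter_upwards [ae_restrict_of_ae (ae_cpt_notMem hE₀)] with θ hθ
    have hz : cpt θ ∈ circleT \ E := ⟨cpt_mem_circleT θ, hθ⟩
    rw [Real.norm_of_nonneg (RSker_nonneg hω hE hET hne hζ hz)]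
    exact RSker_le_profile_add_rsNumerator hω hγ hE hET hne hζ hz

lemma deriv_sq_div_nine_le_RSker (hω : OmegaHyp ω ω' γ) (hγ : 1 ≤ γ) (hE : IsClosed E)
    (hET : E ⊆ circleT) (hζ : ζ ∈ circleT \ E) (hz : z ∈ circleT \ E) {e : ℂ} (he : e ∈ E)
    (hζe : dE E ζ = ‖ζ - e‖) (hze : ‖z - e‖ ≤ dE E ζ / 2) :
    ω' (dE E ζ) ^ 2 / 9 ≤ RSker ω E ζ z := by
  have hne : E.Nonempty := ⟨e, he⟩
  have hu := dE_mem_Ioo hE hET hne hζ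
  have hv := dE_mem_Ioo hE hET hne hz
  set u := dE E ζ
  have hω' := hω.deriv_nonneg hu
  have hvu : dE E z ≤ u / 2 :=
    ((Metric.infDist_le_dist_of_mem he).trans_eq (dist_eq_norm z e)).trans hze
  have hgap : u * ω' u / 2 ≤ ω u - ω (dE E z) := by
    have htangent := hω.sub_le_deriv_mul_sub hγ hu (Ioo_subset_Ioc_self hv)
    nlinarith
  have hdist : ‖ζ - z‖ ≤ 3 * u / 2 := by
    have := norm_sub_le_norm_sub_add_norm_sub ζ e z
    rw [norm_sub_rev e z] at this
    linarith
  have hζz : 0 < ‖ζ - z‖ := by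
    refine norm_pos_iff.2 (sub_ne_zero.2 ?_)
    rintro rfl
    linarith [hu.1]
  rw [RSker_eq_rsNumerator_div, le_div_iff₀ (by positivity)]
  calc ω' u ^ 2 / 9 * ‖ζ - z‖ ^ 2 ≤ ω' u ^ 2 / 9 * (3 * u / 2) ^ 2 := by gcongr
    _ = (u * ω' u / 2) ^ 2 := by ring
    _ ≤ (ω u - ω (dE E z)) ^ 2 := by
        have := hu.1
        gcongr
    _ = (ω (dE E z) - ω u) ^ 2 := by ring
    _ ≤ _ := sq_sub_le_rsNumerator (hω.pos (Ioo_subset_Ioc_self hv))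
        (hω.pos (Ioo_subset_Ioc_self hu))

lemma mul_deriv_sq_le_locDir (hω : OmegaHyp ω ω' γ) (hγ : 2 < γ) (hE : IsClosed E)
    (hET : E ⊆ circleT) (hne : E.Nonempty) (hE₀ : MeasureZeroOnCircle E)
    (hlog : LogOmegaInt ω E) (hζ : ζ ∈ circleT \ E) :
    dE E ζ * ω' (dE E ζ) ^ 2 ≤ 18 * π * locDir ω E ζ := by
  have hu := dE_mem_Ioo hE hET hne hζ
  obtain ⟨e, he, hζe⟩ := hE.exists_infDist_eq_dist hne ζ
  obtain ⟨φ, -, rfl⟩ := exists_mem_Ioc_cpt_eq (hET he) 0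
  have hmem : ∀ᵐ θ, cpt θ ∈ circleT \ E :=
    (ae_cpt_notMem hE₀).mono fun θ hθ => ⟨cpt_mem_circleT θ, hθ⟩
  have harc := two_mul_mul_le_circInt (f := RSker ω E ζ) (φ := φ) (s := dE E ζ / 2)
    (m := ω' (dE E ζ) ^ 2 / 9) (by linarith [hu.1]) (by linarith [hu.1, hu.2])
    (integrableOn_RSker hω hγ hE hET hne hE₀ hlog hζ)
    (hmem.mono fun θ hθ => RSker_nonneg hω hE hET hne hζ hθ)
    (hmem.mono fun θ hθ hθφ => deriv_sq_div_nine_le_RSker hω (by linarith) hE hET hζ hθ he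
      (hζe.trans (dist_eq_norm _ _)) ((norm_cpt_sub_le θ φ).trans hθφ))
  have hlocDir : 18 * π * locDir ω E ζ = 9 * circInt (RSker ω E ζ) := by
    rw [locDir]
    field_simp
    ring
  linarith

end LocalDirichletIntegral

theorem statement3_general {γ : ℝ} (hγ : 2 < γ) :
    ∃ C > (0 : ℝ), ∀ (ω ω' : ℝ → ℝ) (E : Set ℂ), OmegaHyp ω ω' γ → IsClosed E → E ⊆ circleT →
      ∀ ζ ∈ circleT \ E,
        locDirOn ω E (compArc E ζ) ζ ≤ C * (dE E ζ * ω' (dE E ζ) ^ 2) ∧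
        locDirOn ω E (SigmaSet E ζ) ζ ≤ C * (dE E ζ * ω' (dE E ζ) ^ 2) ∧
        (MeasureZeroOnCircle E → LogOmegaInt ω E →
          dE E ζ * ω' (dE E ζ) ^ 2 ≤ C * locDir ω E ζ) := by
  set A := (3 * γ ^ 2 + 32) / 4 * ∫ x : ℝ, profile γ⁻¹ |x|
  have hA : 0 ≤ A := mul_nonneg (by positivity) <| integral_nonneg fun x =>
    (isRadialMajorant_profile (inv_lt_one_half_of_two_lt hγ)).nonneg _ (abs_nonneg x)
  have hπ := pi_pos
  have hArc : 3 * A ≤ 3 * A + 18 * π := by linarith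
  have hSigma : A ≤ 3 * A + 18 * π := by linarith
  refine ⟨3 * A + 18 * π, by positivity, fun ω ω' E hω hE hET ζ hζ => ?_⟩
  rcases E.eq_empty_or_nonempty with rfl | hne
  · simp [locDirOn, locDir, circIntOn, circInt, RSker_empty, dE]
  have hQ : 0 ≤ dE E ζ * ω' (dE E ζ) ^ 2 := mul_nonneg Metric.infDist_nonneg (sq_nonneg _)
  refine ⟨?_, ?_, fun hE₀ hlog => ?_⟩
  · exact (locDirOn_compArc_le hω hγ hE hET hne hζ).trans (mul_le_mul_of_nonneg_right hArc hQ)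
  · exact (locDirOn_SigmaSet_le hω hγ hE hET hne hζ).trans (mul_le_mul_of_nonneg_right hSigma hQ)
  · have hlower := mul_deriv_sq_le_locDir hω hγ hE hET hne hE₀ hlog hζ
    have hL : 0 ≤ locDir ω E ζ := nonneg_of_mul_nonneg_right (hQ.trans hlower) (by positivity)
    exact hlower.trans (mul_le_mul_of_nonneg_right (by linarith) hL)

/-- For `ω` as in the standing hypotheses and any Carleson set `E` of measure
zero, for every `ζ ∈ 𝕋∖E`:
(i) `D_{ζ,I(ζ,E)}(f_{ω,E}) ≲ dist(ζ,E)ω'(dist(ζ,E))²`;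
(ii) `D_{ζ,Σ(ζ,E)}(f_{ω,E}) ≲ dist(ζ,E)ω'(dist(ζ,E))²`;
(iii) `D_ζ(f_{ω,E}) ≳ dist(ζ,E)ω'(dist(ζ,E))²`;
with implied constants depending only on `γ`. -/
theorem statement3 :
    ∀ γ : ℝ, 2 < γ → ∃ C > (0:ℝ),
      ∀ (ω ω' : ℝ → ℝ) (E : Set ℂ), OmegaHyp ω ω' γ →
        IsClosed E → E ⊆ circleT → MeasureZeroOnCircle E → CarlesonSet E →
        LogOmegaInt ω E →
        ∀ ζ ∈ circleT \ E,
          locDirOn ω E (compArc E ζ) ζ ≤ C * (dE E ζ * (ω' (dE E ζ)) ^ 2) ∧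
          locDirOn ω E (SigmaSet E ζ) ζ ≤ C * (dE E ζ * (ω' (dE E ζ)) ^ 2) ∧
          dE E ζ * (ω' (dE E ζ)) ^ 2 ≤ C * locDir ω E ζ := by
  intro γ hγ
  obtain ⟨C, hC, hbounds⟩ := statement3_general hγ
  exact ⟨C, hC, fun ω ω' E hω hE hET hE₀ _ hlog ζ hζ =>
    (hbounds ω ω' E hω hE hET ζ hζ).imp_right (And.imp_right fun hlower => hlower hE₀ hlog)⟩
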